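/- (Key step (3.3) in the proof of Theorem 2.1(a),(c)) Let G ⊆ [0,∞) be a Borel set and β ∈ (0, d). If C_{g_{d−β,+}}(G) > 0, then there exists μ ∈ P(G) such that ∫_{ℝ^d} [∫∫_{G×G} Re χ_ξ(t−s) μ(dt) μ(ds)] ‖ξ‖^{β−d} dξ < +∞ and ∫_{ℝ^d} [∫∫_{G×G} max(−Re χ_ξ(t−s), 0) μ(dt) μ(ds)] ‖ξ‖^{β−d} dξ < +∞. -/

import Mathlib

open MeasureTheory Complex
open scoped RealInnerProductSpace ENNReal

noncomputable section

/-- `χ_ξ(x) = exp(−|x| Ψ(sign(x) ξ))`. -/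
def chi {d : ℕ} (Ψ : EuclideanSpace ℝ (Fin d) → ℂ) (ξ : EuclideanSpace ℝ (Fin d)) (x : ℝ) : ℂ :=
  Complex.exp (((-|x| : ℝ) : ℂ) * Ψ (Real.sign x • ξ))

/-- `g_{γ,+}(x) = ∫_{ℝ^d} (Re χ_ξ(x))_+ ‖ξ‖^{−γ} dξ`, with values in `[0,∞]`. -/
def gplus {d : ℕ} (Ψ : EuclideanSpace ℝ (Fin d) → ℂ) (γ : ℝ) (x : ℝ) : ℝ≥0∞ :=
  ∫⁻ ξ : EuclideanSpace ℝ (Fin d),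
    ENNReal.ofReal (max ((chi Ψ ξ x).re) 0) * (ENNReal.ofReal ‖ξ‖) ^ (-γ) ∂volume

/-- `g_{γ,−}(x) = ∫_{ℝ^d} (Re χ_ξ(x))_− ‖ξ‖^{−γ} dξ`, with values in `[0,∞]`. -/
def gminus {d : ℕ} (Ψ : EuclideanSpace ℝ (Fin d) → ℂ) (γ : ℝ) (x : ℝ) : ℝ≥0∞ :=
  ∫⁻ ξ : EuclideanSpace ℝ (Fin d),
    ENNReal.ofReal (max (-(chi Ψ ξ x).re) 0) * (ENNReal.ofReal ‖ξ‖) ^ (-γ) ∂volume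

/-- The `f`-energy `E_f(μ) = ∫∫_{G×G} f(t−s) μ(dt)μ(ds)` of a measure on `ℝ`,
for a `[0,∞]`-valued kernel `f`. -/
def energyR (f : ℝ → ℝ≥0∞) (G : Set ℝ) (μ : Measure ℝ) : ℝ≥0∞ :=
  ∫⁻ t in G, ∫⁻ s in G, f (t - s) ∂μ ∂μ

/-- The `f`-capacity `C_f(G) = [inf_{μ ∈ P(G)} E_f(μ)]⁻¹` (with `1/∞ = 0`), the infimum
being over Borel probability measures supported in `G`. -/
def capacityR (f : ℝ → ℝ≥0∞) (G : Set ℝ) : ℝ≥0∞ :=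
  (⨅ (μ : Measure ℝ) (_ : IsProbabilityMeasure μ ∧ μ Gᶜ = 0), energyR f G μ)⁻¹

lemma measurable_real_sign_aux : Measurable Real.sign := by
  unfold Real.sign
  exact Measurable.ite measurableSet_Iio measurable_const
    (Measurable.ite measurableSet_Ioi measurable_const measurable_const)

lemma measurable_chi_aux {d : ℕ} (Ψ : EuclideanSpace ℝ (Fin d) → ℂ) (hΨ : Measurable Ψ) :
    Measurable fun q : EuclideanSpace ℝ (Fin d) × (ℝ × ℝ) =>
      (chi Ψ q.1 (q.2.1 - q.2.2)).re := by
  unfold chi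
  have h0 : Measurable fun q : EuclideanSpace ℝ (Fin d) × (ℝ × ℝ) => q.2.1 - q.2.2 := by fun_prop
  have h1 : Measurable fun q : EuclideanSpace ℝ (Fin d) × (ℝ × ℝ) =>
      Ψ (Real.sign (q.2.1 - q.2.2) • q.1) :=
    hΨ.comp ((measurable_real_sign_aux.comp h0).smul measurable_fst)
  have h2 : Measurable fun q : EuclideanSpace ℝ (Fin d) × (ℝ × ℝ) =>
      ((-|q.2.1 - q.2.2| : ℝ) : ℂ) := by
    refine Complex.measurable_ofReal.comp ?_
    exact (measurable_norm.comp h0).neg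
  exact Complex.measurable_re.comp (Complex.measurable_exp.comp (h2.mul h1))

lemma chi_re_eq_aux {d : ℕ} (Ψ : EuclideanSpace ℝ (Fin d) → ℂ)
    {Ω : Type*} [MeasurableSpace Ω] (P : Measure Ω) [IsProbabilityMeasure P]
    (X : ℝ → Ω → EuclideanSpace ℝ (Fin d))
    (hXmeas : Measurable fun p : ℝ × Ω => X p.1 p.2)
    (hX : ∀ s t : ℝ, 0 ≤ s → s ≤ t → ∀ ξ : EuclideanSpace ℝ (Fin d),
      ∫ ω, Complex.exp ((⟪ξ, X t ω - X s ω⟫ : ℂ) * Complex.I) ∂P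
        = Complex.exp (((-(t - s) : ℝ) : ℂ) * Ψ ξ))
    (ξ : EuclideanSpace ℝ (Fin d)) (t s : ℝ) (ht : 0 ≤ t) (hs : 0 ≤ s) :
    (chi Ψ ξ (t - s)).re = ∫ ω, Real.cos (⟪ξ, X t ω⟫ - ⟪ξ, X s ω⟫) ∂P := by
  have hm : ∀ t, Measurable (X t) := fun t => hXmeas.comp (measurable_prodMk_left)
  have key : ∀ s t : ℝ, 0 ≤ s → s ≤ t → ∀ ξ : EuclideanSpace ℝ (Fin d),
      (Complex.exp (((-(t - s) : ℝ) : ℂ) * Ψ ξ)).re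
        = ∫ ω, Real.cos (⟪ξ, X t ω⟫ - ⟪ξ, X s ω⟫) ∂P := by
    intro s t hs hst ξ
    rw [← hX s t hs hst ξ]
    have hmm : Measurable fun ω => ⟪ξ, X t ω - X s ω⟫ :=
      measurable_const.inner ((hm t).sub (hm s))
    have hint : Integrable
        (fun ω => Complex.exp ((⟪ξ, X t ω - X s ω⟫ : ℂ) * Complex.I)) P := by
      refine Integrable.of_bound (C := 1) ?_ ?_
      · exact (Complex.measurable_exp.comp
          ((Complex.measurable_ofReal.comp hmm).mul_const _)).aestronglyMeasurable
      · exact Filter.Eventually.of_forall fun ω => by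
          rw [Complex.norm_exp_ofReal_mul_I]
    have := integral_re hint
    simp only [RCLike.re_to_complex] at this
    rw [← this]
    refine integral_congr_ae (Filter.Eventually.of_forall fun ω => ?_)
    simp only [Complex.exp_ofReal_mul_I_re, inner_sub_right]
  rcases lt_trichotomy t s with h | h | h
  · have := key t s ht h.le (-ξ)
    simp only [inner_neg_left] at this
    unfold chi
    rw [abs_of_neg (by linarith), Real.sign_of_neg (by linarith)]
    rw [show - -(t - s) = -(s - t) by ring, neg_one_smul, this]
    refine integral_congr_ae (Filter.Eventually.of_forall fun ω => ?_)
    simp only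
    congr 1
    ring
  · subst h
    simp [chi]
  · have := key s t hs h.le ξ
    unfold chi
    rw [abs_of_pos (by linarith), Real.sign_of_pos (by linarith), one_smul, this]

lemma integral_cos_nonneg_aux {d : ℕ}
    {Ω : Type*} [MeasurableSpace Ω] (P : Measure Ω) [IsProbabilityMeasure P]
    (X : ℝ → Ω → EuclideanSpace ℝ (Fin d))
    (hXmeas : Measurable fun p : ℝ × Ω => X p.1 p.2)
    (ν : Measure ℝ) [IsFiniteMeasure ν] (ξ : EuclideanSpace ℝ (Fin d)) :
    0 ≤ ∫ p : ℝ × ℝ, ∫ ω, Real.cos (⟪ξ, X p.1 ω⟫ - ⟪ξ, X p.2 ω⟫) ∂P ∂(ν.prod ν) := by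
  have hY : Measurable fun p : ℝ × Ω => ⟪ξ, X p.1 p.2⟫ := measurable_const.inner hXmeas
  have hm1 : Measurable fun q : (ℝ × ℝ) × Ω => ⟪ξ, X q.1.1 q.2⟫ :=
    hY.comp (by fun_prop : Measurable fun q : (ℝ × ℝ) × Ω => (q.1.1, q.2))
  have hm2 : Measurable fun q : (ℝ × ℝ) × Ω => ⟪ξ, X q.1.2 q.2⟫ :=
    hY.comp (by fun_prop : Measurable fun q : (ℝ × ℝ) × Ω => (q.1.2, q.2))
  rw [integral_integral_swap]
  · refine integral_nonneg fun ω => ?_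
    have hω : Measurable fun t : ℝ => ⟪ξ, X t ω⟫ := hY.comp measurable_prodMk_right
    have hc : Integrable (fun t : ℝ => Real.cos ⟪ξ, X t ω⟫) ν :=
      Integrable.of_bound (C := 1) (Real.measurable_cos.comp hω).aestronglyMeasurable
        (Filter.Eventually.of_forall fun t => Real.abs_cos_le_one _)
    have hs : Integrable (fun t : ℝ => Real.sin ⟪ξ, X t ω⟫) ν :=
      Integrable.of_bound (C := 1) (Real.measurable_sin.comp hω).aestronglyMeasurable
        (Filter.Eventually.of_forall fun t => Real.abs_sin_le_one _)
    simp only [Real.cos_sub]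
    rw [integral_add (hc.mul_prod hc) (hs.mul_prod hs),
      integral_prod_mul (fun t : ℝ => Real.cos ⟪ξ, X t ω⟫) (fun t : ℝ => Real.cos ⟪ξ, X t ω⟫),
      integral_prod_mul (fun t : ℝ => Real.sin ⟪ξ, X t ω⟫) (fun t : ℝ => Real.sin ⟪ξ, X t ω⟫)]
    exact add_nonneg (mul_self_nonneg _) (mul_self_nonneg _)
  · exact Integrable.of_bound (C := 1)
      (Real.measurable_cos.comp (hm1.sub hm2)).aestronglyMeasurable
      (Filter.Eventually.of_forall fun t => Real.abs_cos_le_one _)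

/-- **Key step (3.3).** Let `X` be a process with Lévy-type exponent `Ψ`,
`G ⊆ [0,∞)` Borel and `β ∈ (0,d)`. If `C_{g_{d−β,+}}(G) > 0`, then there is a Borel
probability measure `μ` supported in `G` with
`∫_{ℝ^d} [∫∫_{G×G} Re χ_ξ(t−s) μ(dt)μ(ds)] ‖ξ‖^{β−d} dξ < ∞` and
`∫_{ℝ^d} [∫∫_{G×G} (Re χ_ξ(t−s))_− μ(dt)μ(ds)] ‖ξ‖^{β−d} dξ < ∞`. -/
theorem stmt7 {d : ℕ} (hd : 1 ≤ d) (Ψ : EuclideanSpace ℝ (Fin d) → ℂ) (hΨ : Measurable Ψ)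
    {Ω : Type*} [MeasurableSpace Ω] (P : Measure Ω) [IsProbabilityMeasure P]
    (X : ℝ → Ω → EuclideanSpace ℝ (Fin d))
    (hXmeas : Measurable fun p : ℝ × Ω => X p.1 p.2)
    (hX : ∀ s t : ℝ, 0 ≤ s → s ≤ t → ∀ ξ : EuclideanSpace ℝ (Fin d),
      ∫ ω, Complex.exp ((⟪ξ, X t ω - X s ω⟫ : ℂ) * Complex.I) ∂P
        = Complex.exp (((-(t - s) : ℝ) : ℂ) * Ψ ξ))
    (G : Set ℝ) (hG : MeasurableSet G) (hG0 : G ⊆ Set.Ici 0)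
    (β : ℝ) (hβ0 : 0 < β) (hβd : β < d)
    (hcap : 0 < capacityR (gplus Ψ ((d : ℝ) - β)) G) :
    ∃ μ : Measure ℝ, IsProbabilityMeasure μ ∧ μ Gᶜ = 0 ∧
      (∫⁻ ξ : EuclideanSpace ℝ (Fin d),
          ENNReal.ofReal (∫ t in G, ∫ s in G, (chi Ψ ξ (t - s)).re ∂μ ∂μ)
            * (ENNReal.ofReal ‖ξ‖) ^ (β - d) ∂volume < ⊤) ∧
      (∫⁻ ξ : EuclideanSpace ℝ (Fin d),
          (∫⁻ t in G, ∫⁻ s in G, ENNReal.ofReal (max (-(chi Ψ ξ (t - s)).re) 0) ∂μ ∂μ)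
            * (ENNReal.ofReal ‖ξ‖) ^ (β - d) ∂volume < ⊤) := by
  obtain ⟨μ, ⟨hμ, hμG⟩, hE⟩ : ∃ μ : Measure ℝ, ∃ _ : IsProbabilityMeasure μ ∧ μ Gᶜ = 0,
      energyR (gplus Ψ ((d : ℝ) - β)) G μ < ⊤ := by
    unfold capacityR at hcap
    rw [ENNReal.inv_pos] at hcap
    have := lt_top_iff_ne_top.2 hcap
    simpa only [iInf_lt_iff] using this
  refine ⟨μ, hμ, hμG, ?_⟩
  set ν : Measure ℝ := μ.restrict G with hν
  have hmeas := measurable_chi_aux Ψ hΨ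
  have hpos : ∀ᵐ p ∂(ν.prod ν), 0 ≤ p.1 ∧ 0 ≤ p.2 := by
    have h1 : ∀ᵐ t ∂ν, 0 ≤ t := (ae_restrict_mem hG).mono fun t ht => hG0 ht
    exact (Measure.quasiMeasurePreserving_fst.ae h1).and
      (Measure.quasiMeasurePreserving_snd.ae h1)
  have hKeq : ∀ ξ, ∀ᵐ p ∂(ν.prod ν), (chi Ψ ξ (p.1 - p.2)).re
      = ∫ ω, Real.cos (⟪ξ, X p.1 ω⟫ - ⟪ξ, X p.2 ω⟫) ∂P := fun ξ =>
    hpos.mono fun p hp => chi_re_eq_aux Ψ P X hXmeas hX ξ p.1 p.2 hp.1 hp.2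
  have hKm : ∀ ξ, Measurable fun p : ℝ × ℝ => (chi Ψ ξ (p.1 - p.2)).re := fun ξ =>
    hmeas.comp measurable_prodMk_left
  have hKint : ∀ ξ, Integrable (fun p : ℝ × ℝ => (chi Ψ ξ (p.1 - p.2)).re) (ν.prod ν) := by
    intro ξ
    refine Integrable.of_bound (C := 1) (hKm ξ).aestronglyMeasurable ((hKeq ξ).mono fun p hp => ?_)
    rw [hp]
    refine (norm_integral_le_of_norm_le_const (C := 1)
      (Filter.Eventually.of_forall fun ω => Real.abs_cos_le_one _)).trans ?_
    simp
  have hKnn : ∀ ξ, 0 ≤ ∫ p : ℝ × ℝ, (chi Ψ ξ (p.1 - p.2)).re ∂(ν.prod ν) := by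
    intro ξ
    rw [integral_congr_ae (hKeq ξ)]
    exact integral_cos_nonneg_aux P X hXmeas ν ξ
  -- the positive part
  set A : EuclideanSpace ℝ (Fin d) → ℝ≥0∞ := fun ξ =>
    ∫⁻ p : ℝ × ℝ, ENNReal.ofReal (chi Ψ ξ (p.1 - p.2)).re ∂(ν.prod ν) with hA
  set B : EuclideanSpace ℝ (Fin d) → ℝ≥0∞ := fun ξ =>
    ∫⁻ p : ℝ × ℝ, ENNReal.ofReal (-(chi Ψ ξ (p.1 - p.2)).re) ∂(ν.prod ν) with hB
  have hAfin : ∀ ξ, A ξ ≠ ⊤ := fun ξ => (hKint ξ).lintegral_lt_top.ne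
  have hBfin : ∀ ξ, B ξ ≠ ⊤ := fun ξ => (hKint ξ).neg.lintegral_lt_top.ne
  have hAB : ∀ ξ, ∫ p : ℝ × ℝ, (chi Ψ ξ (p.1 - p.2)).re ∂(ν.prod ν)
      = (A ξ).toReal - (B ξ).toReal := fun ξ =>
    integral_eq_lintegral_pos_part_sub_lintegral_neg_part (hKint ξ)
  have hBA : ∀ ξ, B ξ ≤ A ξ := by
    intro ξ
    rw [← ENNReal.toReal_le_toReal (hBfin ξ) (hAfin ξ)]
    have := hKnn ξ
    rw [hAB] at this
    linarith
  have hIA : ∀ ξ, ENNReal.ofReal (∫ t, ∫ s, (chi Ψ ξ (t - s)).re ∂ν ∂ν) ≤ A ξ := by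
    intro ξ
    rw [integral_integral (f := fun t s => (chi Ψ ξ (t - s)).re) (hKint ξ), hAB]
    refine ENNReal.ofReal_le_of_le_toReal ?_
    linarith [(ENNReal.toReal_nonneg : 0 ≤ (B ξ).toReal)]
  have hBeq : ∀ ξ, (∫⁻ t, ∫⁻ s, ENNReal.ofReal (max (-(chi Ψ ξ (t - s)).re) 0) ∂ν ∂ν) = B ξ := by
    intro ξ
    rw [hB]
    simp only
    have hn : Measurable fun p : ℝ × ℝ => -(chi Ψ ξ (p.1 - p.2)).re := (hKm ξ).neg
    rw [lintegral_prod _ hn.ennreal_ofReal.aemeasurable]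
    simp [ENNReal.ofReal_max]
  have hw : Measurable fun ξ : EuclideanSpace ℝ (Fin d) => (ENNReal.ofReal ‖ξ‖) ^ (β - d) :=
    (ENNReal.measurable_ofReal.comp measurable_norm).pow_const _
  have hfin : ∫⁻ ξ : EuclideanSpace ℝ (Fin d), A ξ * (ENNReal.ofReal ‖ξ‖) ^ (β - d) < ⊤ := by
    refine lt_of_eq_of_lt ?_ hE
    have hF : Measurable fun q : EuclideanSpace ℝ (Fin d) × (ℝ × ℝ) =>
        ENNReal.ofReal (chi Ψ q.1 (q.2.1 - q.2.2)).re * (ENNReal.ofReal ‖q.1‖) ^ (β - d) :=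
      hmeas.ennreal_ofReal.mul (hw.comp measurable_fst)
    have e1 : ∀ ξ, A ξ * (ENNReal.ofReal ‖ξ‖) ^ (β - d) = ∫⁻ p : ℝ × ℝ,
        ENNReal.ofReal (chi Ψ ξ (p.1 - p.2)).re * (ENNReal.ofReal ‖ξ‖) ^ (β - d) ∂(ν.prod ν) :=
      fun ξ => (lintegral_mul_const _ (hKm ξ).ennreal_ofReal).symm
    simp only [e1]
    rw [lintegral_lintegral_swap hF.aemeasurable,
      lintegral_prod _ (hF.lintegral_prod_left').aemeasurable]
    simp [energyR, gplus, ENNReal.ofReal_max, hν]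
  constructor
  · exact (lintegral_mono fun ξ => mul_le_mul_left (hIA ξ) _).trans_lt hfin
  · refine (lintegral_mono fun ξ => ?_).trans_lt hfin
    rw [hBeq]
    exact mul_le_mul_left (hBA ξ) _
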